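/- Let χ be an irreducible character of a finite group G with K = ker(χ). If K = F(G) and F(G) is strictly contained in the solvable radical Sol(G) of G, then there exists an irreducible character ξ of G such that ker(ξ) < K and cod(ξ) > cod(χ). -/

import Mathlib

open CategoryTheory

/-- The kernel of (the character of) a finite-dimensional complex representation. -/
noncomputable def charKer {G : Type} [Group G] (V : FDRep ℂ G) : Subgroup G :=
  MonoidHom.ker (Representation.asGroupHom V.ρ)

/-- The codegree of a character: `|G : ker χ| / χ(1)`. -/
noncomputable def codeg {G : Type} [Group G] (V : FDRep ℂ G) : ℕ :=
  (charKer V).index / Module.finrank ℂ V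

/-- The set of codegrees of irreducible characters of `G`. -/
def codSet (G : Type) [Group G] : Set ℕ :=
  {n | ∃ V : FDRep ℂ G, Simple V ∧ codeg V = n}

/-- Inner product of class functions on a finite group. -/
noncomputable def innerChar (G : Type) [Group G] (f g : G → ℂ) : ℂ :=
  (∑ᶠ x : G, f x * starRingEnd ℂ (g x)) / Nat.card G

open scoped Classical in
/-- The induced character `θ^G` of a character `θ` of a subgroup `H ≤ G`. -/
noncomputable def indChar {G : Type} [Group G] (H : Subgroup G) (θ : FDRep ℂ ↥H) : G → ℂ :=
  fun g => (∑ᶠ x : G, if h : x * g * x⁻¹ ∈ H then θ.character ⟨x * g * x⁻¹, h⟩ else 0) /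
    Nat.card ↥H

/-!
Write `F = ker χ` and let `M / F` be a chief factor of `G` below the solvable radical. It is
abelian, and `M` is not nilpotent since `F` is the Fitting subgroup, so by Gaschütz's theorem some
maximal subgroup `H` does not contain `⁅M, F⁆`. Then `F H = G`, the group `F / (F ∩ H)` is a chief
factor, and every normal subgroup `N` with `N ∩ F ≤ H` lies in `H`.

Take for `ξ` any irreducible constituent of `χ · ((1_H)^G - 1)`. Its degree is less than
`|G : H| χ(1)`. It is not trivial on `F`, because `F` is transitive on `G / H` and acts trivially
in `χ`, so `ker ξ` meets `F` in `F ∩ H` and hence lies in `H`. As `χ` is a quotient of the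
restriction of `ξ` to `H`, this forces `ker ξ = F ∩ H`, of index `|G : H| |G : F|`, and
`cod ξ > |G : F| / χ(1) = cod χ`.
-/

universe u v

section ChiefFactor

variable {G : Type*} [Group G]

theorem sup_commutator_le {A B C D : Subgroup G} [D.Normal] (hA : ⁅A, C⁆ ≤ D) (hB : ⁅B, C⁆ ≤ D) :
    ⁅A ⊔ B, C⁆ ≤ D := by
  have commutator_le_iff (X : Subgroup G) :
      ⁅X, C⁆ ≤ D ↔ X.map (QuotientGroup.mk' D) ≤
        Subgroup.centralizer (C.map (QuotientGroup.mk' D) : Set (G ⧸ D)) := by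
    rw [← Subgroup.commutator_eq_bot_iff_le_centralizer, ← Subgroup.map_commutator,
      Subgroup.map_eq_bot_iff, QuotientGroup.ker_mk']
  rw [commutator_le_iff] at hA hB ⊢
  rw [Subgroup.map_sup]
  exact sup_le hA hB

theorem le_of_le_commutator_sup {M F : Subgroup G} [F.Normal] [Group.IsSolvable M]
    (h : M ≤ ⁅M, M⁆ ⊔ F) : M ≤ F := by
  let M' := M.map (QuotientGroup.mk' F)
  have : Group.IsSolvable M' :=
    Group.isSolvable_of_surjective ((QuotientGroup.mk' F).subgroupMap_surjective M)
  have perfect : ⁅M', M'⁆ = M' := by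
    refine le_antisymm (Subgroup.commutator_le_self M') ?_
    have := Subgroup.map_mono (f := QuotientGroup.mk' F) h
    rwa [Subgroup.map_sup, QuotientGroup.map_mk'_self, sup_bot_eq, Subgroup.map_commutator] at this
  by_contra hMF
  have hM' : Nontrivial M' := by
    rwa [Subgroup.nontrivial_iff_ne_bot, Ne, Subgroup.map_eq_bot_iff, QuotientGroup.ker_mk']
  refine (Group.IsSolvable.commutator_lt_top_of_nontrivial M').ne ?_
  apply Subgroup.map_injective M'.subtype_injective
  rw [Subgroup.map_subtype_commutator, perfect, ← MonoidHom.range_eq_map, Subgroup.range_subtype]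

theorem le_sup_inf_of_sup_eq_top {X K H : Subgroup G} [X.Normal] (hXK : X ≤ K) (hXH : X ⊔ H = ⊤) :
    K ≤ X ⊔ (K ⊓ H) := by
  intro k hk
  obtain ⟨x, hx, h, hh, rfl⟩ :=
    Subgroup.mem_sup_of_normal_left.1 (hXH ▸ Subgroup.mem_top k : k ∈ X ⊔ H)
  exact Subgroup.mul_mem_sup hx ⟨(K.mul_mem_cancel_left (hXK hx)).1 hk, hh⟩

theorem normal_inf_of_sup_eq_top {M N H : Subgroup G} [M.Normal] [N.Normal] (hNH : N ⊔ H = ⊤)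
    (hMN : M ⊓ N ≤ H) : (M ⊓ H).Normal := by
  rw [← Subgroup.normalizer_eq_top_iff, eq_top_iff, ← hNH]
  refine sup_le (Subgroup.le_normalizer_iff_commutator_le_left.2 ?_) ?_
  · exact ((Subgroup.commutator_mono inf_le_left le_rfl).trans
      (Subgroup.commutator_le_inf M N)).trans (le_inf inf_le_left hMN)
  · exact (le_inf Subgroup.le_normalizer_of_normal Subgroup.le_normalizer).trans
      Subgroup.inf_normalizer_le_normalizer_inf

/-- `M / F` is a chief factor of `G`: both `F < M` are normal in `G`, and no normal subgroup of `G`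
lies strictly between them. -/
structure IsChiefFactor (F M : Subgroup G) : Prop where
  normal_left : F.Normal
  normal_right : M.Normal
  lt : F < M
  eq_or_eq : ∀ X : Subgroup G, X.Normal → F ≤ X → X ≤ M → X = F ∨ X = M

theorem exists_isChiefFactor_le [Finite G] {F S : Subgroup G} [hF : F.Normal] [hS : S.Normal]
    (hFS : F < S) : ∃ M ≤ S, IsChiefFactor F M := by
  obtain ⟨M, ⟨hM, hFM, hMS⟩, hmin⟩ :=
    (Set.toFinite {M : Subgroup G | M.Normal ∧ F < M ∧ M ≤ S}).exists_minimal ⟨S, hS, hFS, le_rfl⟩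
  refine ⟨M, hMS, hF, hM, hFM, fun X hX hFX hXM => ?_⟩
  rcases hFX.eq_or_lt with h | h
  · exact Or.inl h.symm
  · exact Or.inr (hXM.antisymm (hmin ⟨hX, h, hXM.trans hMS⟩ hXM))

theorem IsChiefFactor.commutator_le {F M : Subgroup G} (h : IsChiefFactor F M)
    [Group.IsSolvable M] : ⁅M, M⁆ ≤ F := by
  have := h.normal_left
  have := h.normal_right
  rcases h.eq_or_eq (⁅M, M⁆ ⊔ F) inferInstance le_sup_right
    (sup_le (Subgroup.commutator_le_self M) h.lt.le) with hF | hM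
  · exact le_sup_left.trans hF.le
  · exact absurd (le_of_le_commutator_sup hM.ge) h.lt.not_ge

theorem normal_inf_of_isCoatom {F H : Subgroup G} [F.Normal] [Group.IsNilpotent F]
    (hH : IsCoatom H) : (F ⊓ H).Normal := by
  by_cases hFH : F ≤ H
  · rwa [inf_eq_left.2 hFH]
  have H_le : H ≤ Subgroup.normalizer (F ⊓ H : Subgroup G) :=
    (le_inf Subgroup.le_normalizer_of_normal Subgroup.le_normalizer).trans
      Subgroup.inf_normalizer_le_normalizer_inf
  obtain ⟨x, hx, hxH⟩ := SetLike.exists_of_lt <|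
    Group.normalizerCondition_of_isNilpotent (G := F) (H.subgroupOf F)
      (lt_top_iff_ne_top.2 <| mt Subgroup.subgroupOf_eq_top.1 hFH)
  have x_mem : (x : G) ∈ Subgroup.normalizer (F ⊓ H : Subgroup G) := by
    rw [inf_comm, ← Subgroup.subgroupOf_map_subtype]
    exact Subgroup.le_normalizer_map F.subtype (Subgroup.mem_map_of_mem F.subtype hx)
  exact Subgroup.normalizer_eq_top_iff.1 <| hH.2 _ <| H_le.lt_of_ne fun h =>
    hxH (Subgroup.mem_subgroupOf.2 (h.ge x_mem))

theorem IsChiefFactor.inf_of_isCoatom {F H : Subgroup G} [F.Normal] [Group.IsNilpotent F]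
    (hH : IsCoatom H) (hFH : ¬ F ≤ H) : IsChiefFactor (F ⊓ H) F where
  normal_left := normal_inf_of_isCoatom hH
  normal_right := inferInstance
  lt := inf_lt_left.2 hFH
  eq_or_eq X hX hle hXF := by
    by_cases hXH : X ≤ H
    · exact Or.inl ((le_inf hXF hXH).antisymm hle)
    · refine Or.inr (hXF.antisymm ?_)
      exact (le_sup_inf_of_sup_eq_top hXF (hH.not_le_iff_codisjoint.1 hXH).symm.eq_top).trans
        (sup_le le_rfl hle)

theorem sylow_normalizer_sup_ker_eq_top {N : Type*} [Group N] [Finite G] [Group.IsNilpotent N]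
    {f : G →* N} (hf : Function.Surjective f) {p : ℕ} [Fact p.Prime] (P : Sylow p G) :
    Subgroup.normalizer (P : Set G) ⊔ f.ker = ⊤ := by
  have := Finite.of_surjective f hf
  have : ((P : Subgroup G).map f).Normal := by
    rw [← P.coe_mapSurjective hf]
    infer_instance
  have key := P.normalizer_sup_eq_top' (Subgroup.le_comap_map f P)
  have P_le : (P : Subgroup G) ≤ Subgroup.normalizer (P : Set G) := Subgroup.le_normalizer
  rwa [Subgroup.comap_map_eq, ← sup_assoc, sup_eq_left.2 P_le] at key

/-- Gaschütz's theorem: by Frattini's argument the normalizer of a Sylow subgroup of `M` supplements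
`frattini G`, so it is all of `G`. -/
theorem isNilpotent_of_isNilpotent_map_mk_frattini [Finite G] {M : Subgroup G} [M.Normal]
    (h : Group.IsNilpotent (M.map (QuotientGroup.mk' (frattini G)))) : Group.IsNilpotent M := by
  refine ((Group.isNilpotent_of_finite_tfae (G := M)).out 0 3).2 ?_
  intro p hp P
  have Pnormal : ((P : Subgroup M).map M.subtype).Normal := by
    rw [← Subgroup.normalizer_eq_top_iff]
    apply frattini_nongenerating
    rw [eq_top_iff, ← P.normalizer_sup_eq_top]
    refine sup_le le_sup_left ?_
    let f := (QuotientGroup.mk' (frattini G)).subgroupMap M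
    have f_ker : f.ker.map M.subtype ≤ frattini G := by
      rintro _ ⟨m, hm, rfl⟩
      exact (QuotientGroup.eq_one_iff _).1 (congrArg Subtype.val hm)
    calc M = (Subgroup.normalizer (P : Set M) ⊔ f.ker).map M.subtype := by
          rw [sylow_normalizer_sup_ker_eq_top (MonoidHom.subgroupMap_surjective _ M) P,
            ← MonoidHom.range_eq_map, Subgroup.range_subtype]
      _ ≤ Subgroup.normalizer ((P : Subgroup M).map M.subtype : Subgroup G) ⊔ frattini G := by
          rw [Subgroup.map_sup]
          exact sup_le_sup (Subgroup.le_normalizer_map M.subtype) f_ker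
  exact Pnormal.of_map_subtype

theorem exists_isCoatom_not_commutator_le [Finite G] {M F : Subgroup G} [M.Normal]
    (hMF : ⁅M, M⁆ ≤ F) (hM : ¬ Group.IsNilpotent M) :
    ∃ H : Subgroup G, IsCoatom H ∧ ¬ ⁅M, F⁆ ≤ H := by
  by_contra! h
  have commutator_le : ⁅⁅M, M⁆, M⁆ ≤ frattini G :=
    ((Subgroup.commutator_mono hMF le_rfl).trans_eq (Subgroup.commutator_comm F M)).trans
      (le_iInf₂ h)
  refine hM (isNilpotent_of_isNilpotent_map_mk_frattini ?_)
  refine Subgroup.isNilpotent_of_lowerCentralSeries_eq_bot (n := 2) ?_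
  rw [← Subgroup.map_lowerCentralSeries, Subgroup.map_eq_bot_iff, QuotientGroup.ker_mk']
  exact commutator_le

/-- Otherwise `N H = G`, so that `M ∩ N ≤ F`, the subgroup `M ∩ H` is normal, and
`⁅M, F⁆ = ⁅F (M ∩ H), F⁆ ≤ F ∩ H`. -/
theorem le_of_inf_le_of_not_commutator_le {F M H N : Subgroup G} [Group.IsNilpotent F]
    [N.Normal] (hFM : IsChiefFactor F M) (hH : IsCoatom H) (hMFH : ¬ ⁅M, F⁆ ≤ H)
    (hNF : N ⊓ F ≤ H) : N ≤ H := by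
  have := hFM.normal_left
  have := hFM.normal_right
  have hFH : ¬ F ≤ H := fun h => hMFH ((Subgroup.commutator_le_right M F).trans h)
  have hchief : IsChiefFactor (F ⊓ H) F := .inf_of_isCoatom hH hFH
  have := hchief.normal_left
  have hFF : ⁅F, F⁆ ≤ F ⊓ H := hchief.commutator_le
  by_contra hNH
  have hNH_top : N ⊔ H = ⊤ := (hH.not_le_iff_codisjoint.1 hNH).symm.eq_top
  have hFH_top : F ⊔ H = ⊤ := (hH.not_le_iff_codisjoint.1 hFH).symm.eq_top
  have hNF_comm : ⁅M ⊓ N, F⁆ ≤ F ⊓ H :=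
    (Subgroup.commutator_mono inf_le_right le_rfl).trans <|
      (Subgroup.commutator_le_inf N F).trans (le_inf inf_le_right hNF)
  have hMN : M ⊓ N ≤ F := by
    refine sup_eq_right.1 ((hFM.eq_or_eq (M ⊓ N ⊔ F) inferInstance le_sup_right
      (sup_le inf_le_left hFM.lt.le)).resolve_right fun h => hMFH ?_)
    rw [← h]
    exact (sup_commutator_le hNF_comm hFF).trans inf_le_right
  have : (M ⊓ H).Normal :=
    normal_inf_of_sup_eq_top hNH_top ((le_inf inf_le_right hMN).trans hNF)
  have hMH_comm : ⁅M ⊓ H, F⁆ ≤ F ⊓ H :=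
    (Subgroup.commutator_le_inf _ _).trans (le_inf inf_le_right (inf_le_left.trans inf_le_right))
  refine hMFH ?_
  calc ⁅M, F⁆ ≤ ⁅F ⊔ M ⊓ H, F⁆ :=
        Subgroup.commutator_mono (le_sup_inf_of_sup_eq_top hFM.lt.le hFH_top) le_rfl
    _ ≤ F ⊓ H := sup_commutator_le hFF hMH_comm
    _ ≤ H := inf_le_right

theorem exists_isCoatom_forall_normal_inf_le [Finite G] {F S : Subgroup G}
    (hF : IsGreatest {N : Subgroup G | N.Normal ∧ Group.IsNilpotent N} F) [S.Normal]
    [Group.IsSolvable S] (hFS : F < S) :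
    ∃ H : Subgroup G, IsCoatom H ∧ ¬ F ≤ H ∧ ∀ N : Subgroup G, N.Normal → N ⊓ F ≤ H → N ≤ H := by
  obtain ⟨hFnormal, hFnil⟩ := hF.1
  obtain ⟨M, hMS, hFM⟩ := exists_isChiefFactor_le hFS
  have := hFM.normal_right
  have : Group.IsSolvable M :=
    Group.isSolvable_of_isSolvable_injective (Subgroup.inclusion_injective hMS)
  obtain ⟨H, hH, hMFH⟩ := exists_isCoatom_not_commutator_le hFM.commutator_le fun hM =>
    hFM.lt.not_ge (hF.2 ⟨hFM.normal_right, hM⟩)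
  exact ⟨H, hH, fun h => hMFH ((Subgroup.commutator_le_right M F).trans h),
    fun N _ => le_of_inf_le_of_not_commutator_le hFM hH hMFH⟩

end ChiefFactor

section Subrepresentation

variable {k G V : Type*} [CommRing k] [Group G] [AddCommGroup V] [Module k V]
  {ρ : Representation k G V}

theorem mem_ker_toRepresentation {X : Subrepresentation ρ} {g : G} :
    g ∈ MonoidHom.ker X.toRepresentation ↔ ∀ v ∈ X, ρ g v = v := by
  simp only [MonoidHom.mem_ker, LinearMap.ext_iff, Subtype.ext_iff, Subtype.forall]
  rfl

theorem ker_le_ker_toRepresentation (X : Subrepresentation ρ) :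
    MonoidHom.ker ρ ≤ MonoidHom.ker X.toRepresentation := fun _ hg =>
  mem_ker_toRepresentation.2 fun v _ => congrArg (fun T : Module.End k V => T v) hg

theorem exists_isAtom_le [IsArtinian k V] {U : Subrepresentation ρ} (hU : U ≠ ⊥) :
    ∃ X ≤ U, IsAtom X := by
  have strictMono : StrictMono (Subrepresentation.toSubmodule (ρ := ρ)) :=
    Monotone.strictMono_of_injective (fun _ _ h => h) Subrepresentation.toSubmodule_injective
  have := strictMono.wellFoundedLT
  obtain ⟨X, hX, hXU⟩ := (eq_bot_or_exists_atom_le U).resolve_left hU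
  exact ⟨X, hXU, hX⟩

end Subrepresentation

section Irreducible

variable {k G V : Type*} [Field k] [Monoid G] [AddCommGroup V] [Module k V]
  {ρ : Representation k G V}

theorem nontrivial_of_isIrreducible (hρ : ρ.IsIrreducible) : Nontrivial V := by
  by_contra h
  have := not_nontrivial_iff_subsingleton.1 h
  exact bot_ne_top (α := Subrepresentation ρ)
    (Subrepresentation.toSubmodule_injective (Subsingleton.elim _ _))

theorem isIrreducible_comp_iff_of_surjective {Q : Type*} [Monoid Q] {f : G →* Q}
    (hf : Function.Surjective f) {σ : Representation k Q V} :
    Representation.IsIrreducible (σ.comp f : Representation k G V) ↔ σ.IsIrreducible := by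
  let e : Subrepresentation (σ.comp f : Representation k G V) ≃o Subrepresentation σ :=
    { toFun := fun X => ⟨X.toSubmodule, hf.forall.2 X.apply_mem_toSubmodule⟩
      invFun := fun X => ⟨X.toSubmodule, fun g => X.apply_mem_toSubmodule (f g)⟩
      left_inv := fun _ => rfl
      right_inv := fun _ => rfl
      map_rel_iff' := Iff.rfl }
  exact e.isSimpleOrder_iff

theorem isIrreducible_toRepresentation_of_isAtom {X : Subrepresentation ρ} (hX : IsAtom X) :
    X.toRepresentation.IsIrreducible := by
  let e : Subrepresentation X.toRepresentation ≃o Set.Iic X :=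
    { toFun := fun Y => ⟨⟨Y.toSubmodule.map X.toSubmodule.subtype, by
          rintro g _ ⟨y, hy, rfl⟩
          exact ⟨_, Y.apply_mem_toSubmodule g hy, rfl⟩⟩, Submodule.map_subtype_le _ _⟩
      invFun := fun Y => ⟨Y.1.toSubmodule.comap X.toSubmodule.subtype,
        fun g _ hv => Y.1.apply_mem_toSubmodule g hv⟩
      left_inv := fun Y => Subrepresentation.toSubmodule_injective <|
        Submodule.comap_map_eq_of_injective X.toSubmodule.subtype_injective _
      right_inv := fun Y => Subtype.ext <| Subrepresentation.toSubmodule_injective <|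
        (Submodule.map_comap_subtype _ _).trans (inf_eq_right.2 Y.2)
      map_rel_iff' := Submodule.map_le_map_iff_of_injective X.toSubmodule.subtype_injective _ _ }
  exact e.isSimpleOrder_iff.2 (Set.isSimpleOrder_Iic_iff_isAtom.2 hX)

end Irreducible

section FunctionRep

variable {k G V : Type*} [CommRing k] [Group G] [AddCommGroup V] [Module k V]
  (ρ : Representation k G V) (α : Type*) [MulAction G α]

/-- The representation of `G` on functions `α → V`. For finite `α` it is `V ⊗ k[α]`, so for
`α = G ⧸ H` it affords the product of the character of `ρ` with the permutation character
`(1_H)^G`. -/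
def functionRep : Representation k G (α → V) where
  toFun g :=
    { toFun := fun f x => ρ g (f (g⁻¹ • x))
      map_add' := fun _ _ => funext fun _ => map_add _ _ _
      map_smul' := fun _ _ => funext fun _ => map_smul _ _ _ }
  map_one' := LinearMap.ext fun f => funext fun x => by simp
  map_mul' g h := LinearMap.ext fun f => funext fun x => by simp [mul_smul]

variable {α}

theorem functionRep_apply (g : G) (f : α → V) (x : α) :
    functionRep ρ α g f x = ρ g (f (g⁻¹ • x)) := rfl

variable {ρ} in
theorem functionRep_inv_apply {g : G} (hg : g ∈ MonoidHom.ker ρ) (f : α → V) (x : α) :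
    functionRep ρ α g⁻¹ f x = f (g • x) := by
  rw [functionRep_apply, MonoidHom.mem_ker.1 (inv_mem hg), inv_inv, Module.End.one_apply]

variable (α)

theorem ker_inf_ker_toPermHom_le_ker_functionRep :
    MonoidHom.ker ρ ⊓ (MulAction.toPermHom G α).ker ≤ MonoidHom.ker (functionRep ρ α) := by
  rintro g ⟨hρ, hα⟩
  refine LinearMap.ext fun f => funext fun x => ?_
  have hx : g⁻¹ • x = x := congrArg (· x) (Subgroup.inv_mem _ hα)
  rw [functionRep_apply, hx, MonoidHom.mem_ker.1 hρ, Module.End.one_apply, Module.End.one_apply]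

/-- The subrepresentation of `functionRep ρ α` of functions with zero sum, that is,
`V ⊗ (k[α] - 1)` when `|α|` is invertible in `k`. -/
def sumZero [Fintype α] : Subrepresentation (functionRep ρ α) where
  toSubmodule := LinearMap.ker (∑ x, LinearMap.proj x : (α → V) →ₗ[k] V)
  apply_mem_toSubmodule g f hf := by
    simp only [LinearMap.mem_ker, LinearMap.sum_apply, LinearMap.proj_apply] at hf ⊢
    simp only [functionRep_apply]
    rw [← map_sum, (MulAction.bijective g⁻¹).sum_comp f, hf, map_zero]

variable {ρ α}

theorem mem_sumZero [Fintype α] {f : α → V} : f ∈ sumZero ρ α ↔ ∑ x, f x = 0 := by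
  change f ∈ LinearMap.ker _ ↔ _
  rw [LinearMap.mem_ker, LinearMap.sum_apply]
  rfl

theorem sumZero_ne_bot [Fintype α] [Nontrivial α] [Nontrivial V] : sumZero ρ α ≠ ⊥ := by
  classical
  obtain ⟨x, y, hxy⟩ := exists_pair_ne α
  obtain ⟨v, hv⟩ := exists_ne (0 : V)
  intro h
  have hf : (Pi.single x v - Pi.single y v : α → V) ∈ sumZero ρ α := by
    simp [mem_sumZero, Finset.sum_sub_distrib]
  rw [h] at hf
  have hx := congrFun (show _ = (0 : α → V) from hf) x
  simp [Pi.single_eq_of_ne hxy, hv] at hx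

theorem eq_zero_of_mem_sumZero [Fintype α] [MulAction.IsPretransitive (MonoidHom.ker ρ) α]
    (hα : IsUnit (Fintype.card α : k)) {f : α → V} (hf : f ∈ sumZero ρ α)
    (hfix : ∀ g ∈ MonoidHom.ker ρ, functionRep ρ α g f = f) : f = 0 := by
  have hconst (x y : α) : f x = f y := by
    obtain ⟨⟨g, hg⟩, rfl⟩ := MulAction.exists_smul_eq (MonoidHom.ker ρ) y x
    rw [Subgroup.mk_smul, ← functionRep_inv_apply hg f, hfix _ (inv_mem hg)]
  funext x
  have hsum := mem_sumZero.1 hf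
  rw [Finset.sum_congr rfl fun y _ => hconst y x, Finset.sum_const, Finset.card_univ,
    ← Nat.cast_smul_eq_nsmul k] at hsum
  exact (hα.smul_eq_zero).1 hsum

end FunctionRep

section IrreducibleFunctionRep

variable {k G V α : Type*} [Field k] [Group G] [AddCommGroup V] [Module k V]
  {ρ : Representation k G V} [MulAction G α]

theorem finrank_lt_of_le_sumZero [Fintype α] [Nonempty α] [Nontrivial V] [FiniteDimensional k V]
    {X : Subrepresentation (functionRep ρ α)} (hX : X ≤ sumZero ρ α) :
    Module.finrank k X.toSubmodule < Fintype.card α * Module.finrank k V := by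
  classical
  obtain ⟨v, hv⟩ := exists_ne (0 : V)
  have hX_top : X.toSubmodule ≠ ⊤ := by
    intro h
    have hf : Pi.single (Classical.arbitrary α) v ∈ X.toSubmodule := h ▸ Submodule.mem_top
    have := mem_sumZero.1 (hX hf)
    simp [hv] at this
  exact (Submodule.finrank_lt hX_top).trans_eq (by simp [Module.finrank_pi_fintype])

theorem exists_mem_apply_eq (hρ : ρ.IsIrreducible)
    [MulAction.IsPretransitive (MonoidHom.ker ρ) α] {X : Subrepresentation (functionRep ρ α)}
    (hX : X ≠ ⊥) (a : α) (v : V) : ∃ f ∈ X, f a = v := by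
  let E : Subrepresentation ρ :=
    ⟨X.toSubmodule.map (LinearMap.proj a), by
      rintro g _ ⟨f, hf, rfl⟩
      obtain ⟨⟨n, hn⟩, hna⟩ := MulAction.exists_smul_eq (MonoidHom.ker ρ) a (g • a)
      refine ⟨functionRep ρ α n⁻¹ (functionRep ρ α g f),
        X.apply_mem_toSubmodule _ (X.apply_mem_toSubmodule g hf), ?_⟩
      rw [Subgroup.mk_smul] at hna
      rw [LinearMap.proj_apply, functionRep_inv_apply hn, hna, functionRep_apply, inv_smul_smul,
        LinearMap.proj_apply]⟩
  have hE : E ≠ ⊥ := by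
    refine fun hbot => hX (Subrepresentation.toSubmodule_injective ?_)
    refine (Submodule.eq_bot_iff _).2 fun f hf => funext fun x => ?_
    obtain ⟨⟨n, hn⟩, rfl⟩ := MulAction.exists_smul_eq (MonoidHom.ker ρ) a x
    rw [Subgroup.mk_smul, ← functionRep_inv_apply hn f]
    exact hbot.le ⟨_, X.apply_mem_toSubmodule n⁻¹ hf, rfl⟩
  exact ((hρ.eq_bot_or_eq_top E).resolve_left hE).ge (Submodule.mem_top (x := v))

theorem stabilizer_inf_ker_toRepresentation_le (hρ : ρ.IsIrreducible)
    [MulAction.IsPretransitive (MonoidHom.ker ρ) α] {X : Subrepresentation (functionRep ρ α)}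
    (hX : X ≠ ⊥) (a : α) :
    MulAction.stabilizer G a ⊓ MonoidHom.ker X.toRepresentation ≤ MonoidHom.ker ρ := by
  rintro g ⟨hga, hgX⟩
  refine LinearMap.ext fun v => ?_
  obtain ⟨f, hf, rfl⟩ := exists_mem_apply_eq hρ hX a v
  have hfix := congrFun (mem_ker_toRepresentation.1 hgX f hf) a
  rwa [functionRep_apply, inv_smul_eq_iff.2 (MulAction.mem_stabilizer_iff.1 hga).symm] at hfix

end IrreducibleFunctionRep

section TransitiveAction

variable {k G V α : Type*} [Field k] [Group G] [MulAction G α] [AddCommGroup V] [Module k V]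
  {ρ : Representation k G V}

theorem isPretransitive_of_sup_stabilizer_eq_top [MulAction.IsPretransitive G α] {N : Subgroup G}
    [N.Normal] {a : α} (h : N ⊔ MulAction.stabilizer G a = ⊤) : MulAction.IsPretransitive N α := by
  refine (MulAction.isPretransitive_iff_base a).2 fun x => ?_
  obtain ⟨g, rfl⟩ := MulAction.exists_smul_eq G a x
  obtain ⟨n, hn, s, hs, rfl⟩ :=
    Subgroup.mem_sup_of_normal_left.1 (h ▸ Subgroup.mem_top g : g ∈ N ⊔ MulAction.stabilizer G a)
  exact ⟨⟨n, hn⟩, by rw [Subgroup.mk_smul, mul_smul, MulAction.mem_stabilizer_iff.1 hs]⟩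

theorem le_ker_toPermHom_of_le_stabilizer [MulAction.IsPretransitive G α] {N : Subgroup G}
    [hN : N.Normal] {a : α} (h : N ≤ MulAction.stabilizer G a) :
    N ≤ (MulAction.toPermHom G α).ker := by
  refine fun n hn => Equiv.ext fun x => ?_
  obtain ⟨g, rfl⟩ := MulAction.exists_smul_eq G a x
  have hconj := MulAction.mem_stabilizer_iff.1 (h (hN.conj_mem' n hn g))
  rwa [mul_smul, mul_smul, inv_smul_eq_iff] at hconj

theorem exists_isAtom_functionRep [FiniteDimensional k V] (hρ : ρ.IsIrreducible) [Finite α]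
    [Nontrivial α] (hα : (Nat.card α : k) ≠ 0) [MulAction.IsPretransitive (MonoidHom.ker ρ) α] :
    ∃ X : Subrepresentation (functionRep ρ α), IsAtom X ∧
      Module.finrank k X.toSubmodule < Nat.card α * Module.finrank k V ∧
      ¬ MonoidHom.ker ρ ≤ MonoidHom.ker X.toRepresentation := by
  have := Fintype.ofFinite α
  have := nontrivial_of_isIrreducible hρ
  rw [Nat.card_eq_fintype_card] at hα ⊢
  obtain ⟨X, hX, hXatom⟩ := exists_isAtom_le (sumZero_ne_bot (ρ := ρ) (α := α))
  refine ⟨X, hXatom, finrank_lt_of_le_sumZero hX, fun hle => hXatom.1 ?_⟩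
  refine Subrepresentation.toSubmodule_injective ((Submodule.eq_bot_iff _).2 fun f hf => ?_)
  exact eq_zero_of_mem_sumZero hα.isUnit (hX hf) fun g hg =>
    mem_ker_toRepresentation.1 (hle hg) f hf

theorem ker_toRepresentation_eq_inf_stabilizer (hρ : ρ.IsIrreducible)
    [MulAction.IsPretransitive G α] [MulAction.IsPretransitive (MonoidHom.ker ρ) α] {a : α}
    (hchief : IsChiefFactor (MonoidHom.ker ρ ⊓ MulAction.stabilizer G a) (MonoidHom.ker ρ))
    (ha : ∀ N : Subgroup G, N.Normal → N ⊓ MonoidHom.ker ρ ≤ MulAction.stabilizer G a →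
      N ≤ MulAction.stabilizer G a)
    {X : Subrepresentation (functionRep ρ α)} (hX : X ≠ ⊥)
    (hker : ¬ MonoidHom.ker ρ ≤ MonoidHom.ker X.toRepresentation) :
    MonoidHom.ker X.toRepresentation = MonoidHom.ker ρ ⊓ MulAction.stabilizer G a := by
  set F := MonoidHom.ker ρ
  set H := MulAction.stabilizer G a
  set N := MonoidHom.ker X.toRepresentation
  have := hchief.normal_left
  have FH_le : F ⊓ H ≤ N :=
    (le_inf inf_le_left (le_ker_toPermHom_of_le_stabilizer inf_le_right)).trans <|
      (ker_inf_ker_toPermHom_le_ker_functionRep ρ α).trans (ker_le_ker_toRepresentation X)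
  have NF_eq : N ⊓ F = F ⊓ H :=
    (hchief.eq_or_eq _ inferInstance (le_inf FH_le inf_le_left) inf_le_right).resolve_right
      fun h => hker (inf_eq_right.1 h)
  have N_le_H : N ≤ H := ha N inferInstance (NF_eq.trans_le inf_le_right)
  have N_le_F : N ≤ F :=
    (le_inf N_le_H le_rfl).trans (stabilizer_inf_ker_toRepresentation_le hρ hX a)
  exact (le_inf N_le_F N_le_H).antisymm FH_le

end TransitiveAction

section Degree

theorem dvd_of_isIntegral_div {k : Type*} [Field k] [CharZero k] {a b : ℕ} (hb : b ≠ 0)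
    (h : IsIntegral ℤ ((a : k) / b)) : b ∣ a := by
  have hq : (a : k) / b = algebraMap ℚ k (a / b) := by
    rw [map_div₀, map_natCast, map_natCast]
  rw [hq, isIntegral_algebraMap_iff (algebraMap ℚ k).injective,
    IsIntegrallyClosed.isIntegral_iff] at h
  obtain ⟨m, hm⟩ := h
  rw [eq_div_iff (mod_cast hb), eq_intCast] at hm
  exact Int.natCast_dvd_natCast.1 (Dvd.intro_left m (mod_cast hm))

section CommRing

variable {k G V : Type*} [CommRing k] [Group G] [AddCommGroup V] [Module k V]

theorem isIntegral_sum_smul [Fintype G] {φ : G → k} (ρ : Representation k G V)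
    (hφ : ∀ g, IsIntegral ℤ (φ g)) : IsIntegral ℤ (∑ g, φ g • ρ g) := by
  let A := Algebra.adjoin ℤ (Set.range φ)
  have : Module.Finite ℤ A := Module.Finite.of_fg <|
    fg_adjoin_of_finite (Set.finite_range φ) (Set.forall_mem_range.2 hφ)
  have : Module.Finite ℤ (MonoidAlgebra A G) := Module.Finite.trans A _
  let z : MonoidAlgebra A G :=
    ∑ g, MonoidAlgebra.single g ⟨φ g, Algebra.subset_adjoin ⟨g, rfl⟩⟩
  let L : MonoidAlgebra A G →ₐ[A] Module.End k V := MonoidAlgebra.lift A (Module.End k V) G ρ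
  have hz : L z = ∑ g, φ g • ρ g := by
    simp only [z, L, map_sum, MonoidAlgebra.lift_single]
    rfl
  exact hz ▸ (IsIntegral.of_finite ℤ z).map (L.restrictScalars ℤ)

theorem sum_smul_mul_comm [Fintype G] {φ : G → k} (ρ : Representation k G V)
    (hφ : ∀ g h, φ (h * g * h⁻¹) = φ g) (h : G) :
    (∑ g, φ g • ρ g) * ρ h = ρ h * ∑ g, φ g • ρ g := by
  simp only [Finset.sum_mul, Finset.mul_sum, smul_mul_assoc, mul_smul_comm, ← map_mul]
  refine Fintype.sum_equiv (MulAut.conj h⁻¹).toEquiv _ _ fun g => ?_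
  have hconj : (MulAut.conj h⁻¹).toEquiv g = h⁻¹ * g * h⁻¹⁻¹ := rfl
  rw [hconj, hφ]
  congr 2
  group

end CommRing

variable {k G V : Type*} [Field k] [Group G] [AddCommGroup V] [Module k V]
  [FiniteDimensional k V]

theorem isIntegral_character {M : Type*} [Monoid M] [IsAlgClosed k] (ρ : Representation k M V)
    {g : M} (hg : IsOfFinOrder g) : IsIntegral ℤ (ρ.character g) := by
  unfold Representation.character
  rw [Module.End.trace_eq_sum_roots_charpoly_of_splits (IsAlgClosed.splits _)]
  refine IsIntegral.multiset_sum fun μ hμ => ?_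
  have hev : Module.End.HasEigenvalue (ρ g) μ :=
    (Module.End.hasEigenvalue_iff_isRoot_charpoly _ _).2 (Polynomial.isRoot_of_mem_roots hμ)
  obtain ⟨v, hv⟩ := hev.exists_hasEigenvector
  have hpow := hv.pow_apply (orderOf g)
  rw [← map_pow, pow_orderOf_eq_one, map_one, Module.End.one_apply] at hpow
  have hμ_pow : μ ^ orderOf g = 1 := smul_left_injective k hv.2 (by simp [← hpow])
  exact IsIntegral.of_pow hg.orderOf_pos (hμ_pow ▸ isIntegral_one)

/-- By Schur's lemma the quotient is the scalar by which the central element `∑ g, φ g • g` of the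
group algebra acts. -/
theorem isIntegral_sum_mul_character_div_finrank [Fintype G] [IsAlgClosed k] [CharZero k]
    {φ : G → k} {ρ : Representation k G V} (hρ : ρ.IsIrreducible) (hφ : ∀ g, IsIntegral ℤ (φ g))
    (hconj : ∀ g h, φ (h * g * h⁻¹) = φ g) :
    IsIntegral ℤ ((∑ g, φ g * ρ.character g) / Module.finrank k V) := by
  have := nontrivial_of_isIrreducible hρ
  obtain ⟨c, hc⟩ :=
    (Representation.IsIrreducible.algebraMap_intertwiningMap_bijective_of_isAlgClosed
      (ρ := ρ)).2 ⟨∑ g, φ g • ρ g, sum_smul_mul_comm ρ hconj⟩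
  have hsum : algebraMap k (Module.End k V) c = ∑ g, φ g • ρ g :=
    congrArg Representation.IntertwiningMap.toLinearMap hc
  have htrace : (∑ g, φ g * ρ.character g) / Module.finrank k V = c := by
    have := congrArg (LinearMap.trace k V) hsum
    simp only [Algebra.algebraMap_eq_smul_one, map_smul, LinearMap.trace_one, map_sum,
      smul_eq_mul] at this
    rw [div_eq_iff (mod_cast Module.finrank_pos.ne'), this]
    rfl
  rw [htrace, ← isIntegral_algebraMap_iff (FaithfulSMul.algebraMap_injective k (Module.End k V)),
    hsum]
  exact isIntegral_sum_smul ρ hφ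

theorem sum_character_mul_character_inv [Fintype G] [IsAlgClosed k] [Invertible (Nat.card G : k)]
    {ρ : Representation k G V} (hρ : ρ.IsIrreducible) :
    ∑ g, ρ.character g * ρ.character g⁻¹ = Nat.card G := by
  have h := Representation.char_orthonormal ρ ρ
  rw [if_pos ⟨Representation.Equiv.refl ρ⟩, inv_mul_eq_one₀ (Invertible.ne_zero _)] at h
  exact h.symm

theorem finrank_dvd_card [Finite G] [IsAlgClosed k] [CharZero k] {ρ : Representation k G V}
    (hρ : ρ.IsIrreducible) : Module.finrank k V ∣ Nat.card G := by
  have := Fintype.ofFinite G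
  have := nontrivial_of_isIrreducible hρ
  have : Invertible (Nat.card G : k) := invertibleOfNonzero (mod_cast Nat.card_pos.ne')
  refine dvd_of_isIntegral_div (k := k) Module.finrank_pos.ne' ?_
  rw [← sum_character_mul_character_inv hρ, Finset.sum_congr rfl fun g _ => mul_comm _ _]
  refine isIntegral_sum_mul_character_div_finrank hρ
    (fun g => isIntegral_character ρ (isOfFinOrder_of_finite _)) fun g h => ?_
  rw [← Representation.char_conj ρ g⁻¹ h]
  congr 1
  group

theorem finrank_dvd_index_ker [Finite G] [IsAlgClosed k] [CharZero k] {ρ : Representation k G V}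
    (hρ : ρ.IsIrreducible) : Module.finrank k V ∣ (MonoidHom.ker ρ).index := by
  let σ : Representation k (G ⧸ MonoidHom.ker ρ) V :=
    QuotientGroup.lift (MonoidHom.ker ρ) ρ le_rfl
  have hσ : (σ.comp (QuotientGroup.mk' (MonoidHom.ker ρ)) : Representation k G V) = ρ :=
    QuotientGroup.lift_comp_mk' _ ρ le_rfl
  rw [← hσ, isIrreducible_comp_iff_of_surjective (QuotientGroup.mk'_surjective _)] at hρ
  exact finrank_dvd_card hρ

end Degree

section FDRep

theorem charKer_eq_ker {G : Type} [Group G] (V : FDRep ℂ G) :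
    charKer V = MonoidHom.ker (V.ρ : Representation ℂ G V) := by
  ext g
  exact Units.ext_iff

variable {k : Type u} [Field k]

theorem isIrreducible_of_simple {G : Type v} [Monoid G] {V : FDRep k G} (hV : Simple V) :
    Representation.IsIrreducible (V.ρ : Representation k G V) := by
  have : Nontrivial V := not_subsingleton_iff_nontrivial.1 fun _ =>
    id_nonzero V (by ext v; exact Subsingleton.elim _ _)
  have : Nontrivial (Subrepresentation (V.ρ : Representation k G V)) :=
    ⟨⊥, ⊤, fun h => bot_ne_top (α := Submodule k V) (congrArg Subrepresentation.toSubmodule h)⟩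
  refine ⟨fun X => or_iff_not_imp_left.2 fun hX => ?_⟩
  let f : FDRep.of X.toRepresentation ⟶ V :=
    ⟨FGModuleCat.ofHom X.toSubmodule.subtype, fun _ => rfl⟩
  have : Mono f := ConcreteCategory.mono_of_injective f Subtype.val_injective
  have hf : f ≠ 0 := fun h0 => hX <| Subrepresentation.toSubmodule_injective <|
    (Submodule.eq_bot_iff _).2 fun x hx =>
      congrArg (fun F : FDRep.of X.toRepresentation ⟶ V => F.hom.hom.hom ⟨x, hx⟩) h0
  have := (Simple.mono_isIso_iff_nonzero f).2 hf
  refine Subrepresentation.toSubmodule_injective (Submodule.eq_top_iff'.2 fun v => ?_)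
  have hv : f.hom.hom.hom ((inv f).hom.hom.hom v) = v :=
    congrArg (fun F : V ⟶ V => F.hom.hom.hom v) (IsIso.inv_hom_id f)
  exact hv ▸ ((inv f).hom.hom.hom v : X.toSubmodule).2

theorem simple_of_isIrreducible {G V : Type u} [Group G] [Finite G] [IsAlgClosed k] [CharZero k]
    [AddCommGroup V] [Module k V] [FiniteDimensional k V] {ρ : Representation k G V}
    (hρ : ρ.IsIrreducible) : Simple (FDRep.of ρ) := by
  have := Fintype.ofFinite G
  have : Invertible (Nat.card G : k) := invertibleOfNonzero (mod_cast Nat.card_pos.ne')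
  exact (FDRep.simple_iff_char_is_norm_one _).2 (sum_character_mul_character_inv hρ)

theorem cast_codeg {G : Type} [Group G] [Finite G] {V : FDRep ℂ G} (hV : Simple V) :
    (codeg V : ℚ) = (charKer V).index / Module.finrank ℂ V := by
  have hirr := isIrreducible_of_simple hV
  have := nontrivial_of_isIrreducible hirr
  refine Nat.cast_div ?_ (mod_cast Module.finrank_pos.ne')
  rw [charKer_eq_ker]
  exact finrank_dvd_index_ker hirr

end FDRep

section Codegree

theorem index_inf_of_sup_eq_top {G : Type*} [Group G] {N H : Subgroup G} [N.Normal]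
    (h : N ⊔ H = ⊤) : (N ⊓ H).index = H.index * N.index := by
  rw [← Subgroup.relIndex_mul_index (inf_le_right : N ⊓ H ≤ H), Subgroup.inf_relIndex_right,
    ← Subgroup.relIndex_sup_left, h, Subgroup.relIndex_top_right, mul_comm]

theorem stmt_7_general {k : Type*} {G : Type u} {V : Type v} [Field k] [Group G] [Finite G]
    [NeZero (Nat.card G : k)] [AddCommGroup V] [Module k V] [FiniteDimensional k V]
    (ρ : Representation k G V) (hρ : ρ.IsIrreducible)
    (hF : IsGreatest {N : Subgroup G | N.Normal ∧ Group.IsNilpotent N} (MonoidHom.ker ρ))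
    (S : Subgroup G) [S.Normal] [Group.IsSolvable S] (hFS : MonoidHom.ker ρ < S) :
    ∃ (W : Type (max u v)) (_ : AddCommGroup W) (_ : Module k W) (_ : FiniteDimensional k W)
      (σ : Representation k G W), σ.IsIrreducible ∧ MonoidHom.ker σ < MonoidHom.ker ρ ∧
        ((MonoidHom.ker ρ).index / Module.finrank k V : ℚ) <
          (MonoidHom.ker σ).index / Module.finrank k W := by
  have := hF.1.2
  obtain ⟨H, hH, hFH, hmax⟩ := exists_isCoatom_forall_normal_inf_le hF hFS
  have hFH_top : MonoidHom.ker ρ ⊔ H = ⊤ := (hH.not_le_iff_codisjoint.1 hFH).symm.eq_top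
  have hchief : IsChiefFactor (MonoidHom.ker ρ ⊓ H) (MonoidHom.ker ρ) := .inf_of_isCoatom hH hFH
  have hstab : MulAction.stabilizer G ((1 : G) : G ⧸ H) = H := MulAction.stabilizer_quotient H
  have := isPretransitive_of_sup_stabilizer_eq_top (hstab.symm ▸ hFH_top)
  have : Nontrivial (G ⧸ H) := QuotientGroup.nontrivial_iff.2 hH.1
  have hindex : (Nat.card (G ⧸ H) : k) ≠ 0 := fun h => NeZero.ne (Nat.card G : k) <| by
    rw [← H.card_mul_index, Nat.cast_mul, H.index_eq_card, h, mul_zero]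
  obtain ⟨X, hX, hdeg, hXker⟩ := exists_isAtom_functionRep hρ hindex
  have hirr := isIrreducible_toRepresentation_of_isAtom hX
  have hker : MonoidHom.ker X.toRepresentation = MonoidHom.ker ρ ⊓ H := by
    rw [ker_toRepresentation_eq_inf_stabilizer hρ (hstab.symm ▸ hchief) (hstab.symm ▸ hmax)
      hX.1 hXker, hstab]
  refine ⟨X.toSubmodule, inferInstance, inferInstance, inferInstance, X.toRepresentation, hirr,
    hker ▸ hchief.lt, ?_⟩
  have := nontrivial_of_isIrreducible hρ
  have := nontrivial_of_isIrreducible hirr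
  rw [hker, index_inf_of_sup_eq_top hFH_top, div_lt_div_iff₀ (mod_cast Module.finrank_pos)
    (mod_cast Module.finrank_pos)]
  have hpos : 0 < (MonoidHom.ker ρ).index := Nat.pos_of_ne_zero Subgroup.index_ne_zero_of_finite
  have hlt := Nat.mul_lt_mul_of_pos_left hdeg hpos
  rw [← H.index_eq_card] at hlt
  norm_cast
  linarith

end Codegree

theorem stmt_7 {G : Type} [Group G] [Finite G] (χ : FDRep ℂ G) (hχ : Simple χ)
    (F S : Subgroup G)
    (hF : IsGreatest {N : Subgroup G | N.Normal ∧ Group.IsNilpotent ↥N} F)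
    (hS : IsGreatest {N : Subgroup G | N.Normal ∧ IsSolvable ↥N} S)
    (hK : charKer χ = F) (hFS : F < S) :
    ∃ ξ : FDRep ℂ G, Simple ξ ∧ charKer ξ < charKer χ ∧ codeg χ < codeg ξ := by
  have : S.Normal := hS.1.1
  have : Group.IsSolvable S := hS.1.2
  rw [← hK, charKer_eq_ker] at hF hFS
  obtain ⟨W, _, _, _, σ, hσ, hker, hcodeg⟩ :=
    stmt_7_general (χ.ρ : Representation ℂ G χ) (isIrreducible_of_simple hχ) hF S hFS
  have hξ := simple_of_isIrreducible hσ
  refine ⟨FDRep.of σ, hξ, ?_, ?_⟩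
  · rwa [charKer_eq_ker, charKer_eq_ker]
  · rw [← Nat.cast_lt (α := ℚ), cast_codeg hχ, cast_codeg hξ, charKer_eq_ker, charKer_eq_ker]
    exact hcodeg
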